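/- arXiv:1004.4530 — 2 statements merged into one kernel-verified Lean document; each statement's English description precedes it below -/
import Mathlib

section
/- Let {(φ_n, ψ_n)}_{n≥1} be any sequence of encoder/decoder pairs that asymptotically realizes a (2,2)-threshold scheme with correlation level ℓ ≥ 0. Then limsup_{n→∞} max{ −(1/n) log₂ P_n^X , −(1/n) log₂ P_n^Y } ≤ ℓ; that is, the exponent of the success probability of an impersonation attack cannot exceed the correlation level. -/
open Finset Filter Real
open scoped BigOperators

noncomputable section

/-- `p` is a probability mass function on a finite type. -/
def IsPMF {α : Type*} [Fintype α] (p : α → ℝ) : Prop :=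
  (∀ a, 0 ≤ p a) ∧ ∑ a, p a = 1

open scoped Classical in
/-- The distribution (pushforward pmf) of a random variable `X`
defined on a finite sample space carrying the pmf `p`. -/
def distOf {Ω α : Type*} [Fintype Ω] (p : Ω → ℝ) (X : Ω → α) (x : α) : ℝ :=
  ∑ ω ∈ Finset.univ.filter fun ω => X ω = x, p ω

/-- Base-2 Shannon entropy of a pmf on a finite type
(the convention `0 · log₂ 0 = 0` holds since `Real.logb 2 0 = 0`). -/
def ent {α : Type*} [Fintype α] (q : α → ℝ) : ℝ :=
  -∑ x, q x * Real.logb 2 (q x)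

/-- Base-2 entropy `H(X)` of a random variable `X` under pmf `p`. -/
def entRV {Ω α : Type*} [Fintype Ω] [Fintype α] (p : Ω → ℝ) (X : Ω → α) : ℝ :=
  ent (distOf p X)

/-- Base-2 conditional entropy `H(X|Y) = H(X,Y) − H(Y)`. -/
def condEnt {Ω α β : Type*} [Fintype Ω] [Fintype α] [Fintype β]
    (p : Ω → ℝ) (X : Ω → α) (Y : Ω → β) : ℝ :=
  entRV p (fun ω => (X ω, Y ω)) - entRV p Y

/-- Base-2 mutual information `I(X;Y) = H(X) + H(Y) − H(X,Y)`. -/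
def MI {Ω α β : Type*} [Fintype Ω] [Fintype α] [Fintype β]
    (p : Ω → ℝ) (X : Ω → α) (Y : Ω → β) : ℝ :=
  entRV p X + entRV p Y - entRV p (fun ω => (X ω, Y ω))

/-- `X` and `Y` are independent random variables under the pmf `p`. -/
def IndepRV {Ω α β : Type*} [Fintype Ω] (p : Ω → ℝ) (X : Ω → α) (Y : Ω → β) : Prop :=
  ∀ a b, distOf p (fun ω => (X ω, Y ω)) (a, b) = distOf p X a * distOf p Y b

/-- An encoder/decoder sequence for the asymptotic (2,2)-threshold setup:
for each `n`, a finite nonempty randomness alphabet `U n`, finite share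
alphabets `X n` and `Y n`, a deterministic encoder `enc n` mapping the `n`
secrets and the uniform random number to the two shares, and a decoder
`dec n` (`none` plays the role of the detection symbol `⊥`). -/
structure Scheme22 (𝒮 : Type) where
  U : ℕ → Type
  X : ℕ → Type
  Y : ℕ → Type
  fU : ∀ n, Fintype (U n)
  fX : ∀ n, Fintype (X n)
  fY : ∀ n, Fintype (Y n)
  neU : ∀ n, Nonempty (U n)
  enc : ∀ n, (Fin n → 𝒮) → U n → X n × Y n
  dec : ∀ n, X n × Y n → Option (Fin n → 𝒮)

attribute [instance] Scheme22.fU Scheme22.fX Scheme22.fY Scheme22.neU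

variable {𝒮 : Type} [Fintype 𝒮]

/-- The joint pmf of `(Sⁿ, Uₙ)` on `(Fin n → 𝒮) × C.U n`:
`Sⁿ` is i.i.d. with marginal `PS`, and `Uₙ` is uniform and independent of `Sⁿ`. -/
def jp (C : Scheme22 𝒮) (PS : 𝒮 → ℝ) (n : ℕ) : (Fin n → 𝒮) × C.U n → ℝ :=
  fun ω => (∏ i, PS (ω.1 i)) / (Fintype.card (C.U n) : ℝ)

/-- The secret `Sⁿ` as a random variable. -/
def Sn (C : Scheme22 𝒮) (n : ℕ) : (Fin n → 𝒮) × C.U n → (Fin n → 𝒮) := Prod.fst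

/-- The share `Xₙ` as a random variable. -/
def Xn (C : Scheme22 𝒮) (n : ℕ) : (Fin n → 𝒮) × C.U n → C.X n :=
  fun ω => (C.enc n ω.1 ω.2).1

/-- The share `Yₙ` as a random variable. -/
def Yn (C : Scheme22 𝒮) (n : ℕ) : (Fin n → 𝒮) × C.U n → C.Y n :=
  fun ω => (C.enc n ω.1 ω.2).2

open scoped Classical in
/-- The acceptance region `𝒜ₙ` of the decoder. -/
def AccRegion (C : Scheme22 𝒮) (n : ℕ) : Finset (C.X n × C.Y n) :=
  Finset.univ.filter fun xy => C.dec n xy ≠ none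

open scoped Classical in
/-- The decoding error probability `Pₙᵉ = Pr{ψₙ(φₙ(Sⁿ,Uₙ)) ≠ Sⁿ}`. -/
def Pe (C : Scheme22 𝒮) (PS : 𝒮 → ℝ) (n : ℕ) : ℝ :=
  ∑ ω ∈ Finset.univ.filter
      (fun ω : (Fin n → 𝒮) × C.U n => C.dec n (C.enc n ω.1 ω.2) ≠ some ω.1),
    jp C PS n ω

/-- `Pₙˣ`: the maximal success probability of impersonating participant 1,
the supremum over all forging distributions `Q` on `𝒳ₙ`. -/
def PimpX (C : Scheme22 𝒮) (PS : 𝒮 → ℝ) (n : ℕ) : ℝ :=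
  ⨆ Q : {Q : C.X n → ℝ // IsPMF Q},
    ∑ xy ∈ AccRegion C n, Q.1 xy.1 * distOf (jp C PS n) (Yn C n) xy.2

/-- `Pₙʸ`: the maximal success probability of impersonating participant 2. -/
def PimpY (C : Scheme22 𝒮) (PS : 𝒮 → ℝ) (n : ℕ) : ℝ :=
  ⨆ Q : {Q : C.Y n → ℝ // IsPMF Q},
    ∑ xy ∈ AccRegion C n, distOf (jp C PS n) (Xn C n) xy.1 * Q.1 xy.2

/-- The sequence `{(φₙ,ψₙ)}` asymptotically realizes a (2,2)-threshold scheme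
with correlation level `ℓ`: vanishing decoding error probability, vanishing
normalized leakage `I(Sⁿ;Xₙ)/n` and `I(Sⁿ;Yₙ)/n`, and `I(Xₙ;Yₙ)/n → ℓ`. -/
def Realizes (C : Scheme22 𝒮) (PS : 𝒮 → ℝ) (ℓ : ℝ) : Prop :=
  Tendsto (fun n => Pe C PS n) atTop (nhds 0) ∧
  Tendsto (fun n => MI (jp C PS n) (Sn C n) (Xn C n) / (n : ℝ)) atTop (nhds 0) ∧
  Tendsto (fun n => MI (jp C PS n) (Sn C n) (Yn C n) / (n : ℝ)) atTop (nhds 0) ∧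
  Tendsto (fun n => MI (jp C PS n) (Xn C n) (Yn C n) / (n : ℝ)) atTop (nhds ℓ)

/-!
The product of the marginals of the two shares is one admissible impersonation strategy, so both
impersonation probabilities are at least the probability `b` that the decoder accepts a pair of
shares drawn independently from their marginals. Under the true joint law the decoder accepts with
probability at least `1 - Pₙᵉ`, so acceptance is a test between the joint law and the product of the
marginals, whose relative entropy is `I(Xₙ;Yₙ)`. By the log-sum inequality, coarse-graining to the
accept/reject bit does not increase relative entropy, and that bit has entropy at most `1`, whence
`(1 - Pₙᵉ) * (-log₂ b) ≤ I(Xₙ;Yₙ) + 1`; now divide by `n` and let `n → ∞`.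
-/

variable {Ω α β ι : Type*}

theorem ciSup_mem_Icc [ConditionallyCompleteLattice α] {f : ι → α} {c : α} (hf : ∀ i, f i ≤ c)
    (i : ι) : ⨆ j, f j ∈ Set.Icc (f i) c :=
  have : Nonempty ι := ⟨i⟩
  ⟨le_ciSup ⟨c, Set.forall_mem_range.2 hf⟩ i, ciSup_le hf⟩

section Logarithm

theorem mul_logb_div {b x y : ℝ} (h : y = 0 → x = 0) :
    x * logb b (x / y) = x * logb b x - x * logb b y := by
  rcases eq_or_ne x 0 with rfl | hx
  · simp
  · rw [logb_div hx (mt h hx), mul_sub]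

/-- The right-hand side is convex in `x`, and the left-hand side is its tangent at `x = t * y`. -/
theorem mul_log_add_sub_le_mul_log_div {x y t : ℝ} (hx : 0 ≤ x) (hy : 0 ≤ y) (hxy : y = 0 → x = 0)
    (ht : 0 < t) : x * log t + x - t * y ≤ x * log (x / y) := by
  rcases hx.eq_or_lt with rfl | hx
  · simpa using mul_nonneg ht.le hy
  have hy : 0 < y := hy.lt_of_ne' fun h => hx.ne' (hxy h)
  have hlog : log (t / (x / y)) ≤ t / (x / y) - 1 := log_le_sub_one_of_pos (by positivity)
  rw [log_div ht.ne' (by positivity)] at hlog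
  have hmul := mul_le_mul_of_nonneg_left hlog hx.le
  have hcancel : x * (t / (x / y) - 1) = t * y - x := by field_simp
  linarith

theorem sum_mul_log_sum_div_sum_le {s : Finset ι} {a b : ι → ℝ} (ha : ∀ i ∈ s, 0 ≤ a i)
    (hb : ∀ i ∈ s, 0 ≤ b i) (hab : ∀ i ∈ s, b i = 0 → a i = 0) :
    (∑ i ∈ s, a i) * log ((∑ i ∈ s, a i) / ∑ i ∈ s, b i) ≤ ∑ i ∈ s, a i * log (a i / b i) := by
  set A := ∑ i ∈ s, a i with hA
  set B := ∑ i ∈ s, b i with hB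
  rcases (sum_nonneg ha).eq_or_lt with hA0 | hApos
  · have hzero := (sum_eq_zero_iff_of_nonneg ha).1 hA0.symm
    rw [hA, ← hA0, zero_mul, sum_eq_zero fun i hi => by rw [hzero i hi, zero_mul]]
  have hBpos : 0 < B := (sum_nonneg hb).lt_of_ne' fun hB0 => hApos.ne' <|
    sum_eq_zero fun i hi => hab i hi ((sum_eq_zero_iff_of_nonneg hb).1 hB0 i hi)
  calc A * log (A / B) = ∑ i ∈ s, (a i * log (A / B) + a i - A / B * b i) := by
        rw [sum_sub_distrib, sum_add_distrib, ← sum_mul, ← mul_sum, ← hA, ← hB,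
          div_mul_cancel₀ _ hBpos.ne', add_sub_cancel_right]
    _ ≤ ∑ i ∈ s, a i * log (a i / b i) := sum_le_sum fun i hi =>
        mul_log_add_sub_le_mul_log_div (ha i hi) (hb i hi) (hab i hi) (div_pos hApos hBpos)

theorem neg_one_le_mul_logb_add_mul_logb_one_sub (x : ℝ) :
    -1 ≤ x * logb 2 x + (1 - x) * logb 2 (1 - x) := by
  have hlog2 : 0 < log 2 := log_pos one_lt_two
  have hbin := binEntropy_le_log_two (p := x)
  rw [binEntropy_eq_negMulLog_add_negMulLog_one_sub, negMulLog, negMulLog] at hbin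
  rw [logb, logb, ← mul_div_assoc, ← mul_div_assoc, ← add_div, le_div_iff₀ hlog2]
  linarith

end Logarithm

section IsPMF

variable [Fintype α] [Fintype β] {P : α → ℝ} {Q : β → ℝ}

theorem IsPMF.sum_le_one (hP : IsPMF P) (s : Finset α) : ∑ a ∈ s, P a ≤ 1 :=
  hP.2 ▸ sum_le_univ_sum_of_nonneg hP.1

theorem IsPMF.prod (hP : IsPMF P) (hQ : IsPMF Q) : IsPMF fun z : α × β => P z.1 * Q z.2 := by
  refine ⟨fun z => mul_nonneg (hP.1 _) (hQ.1 _), ?_⟩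
  rw [Fintype.sum_prod_type, ← sum_mul_sum, hP.2, hQ.2, one_mul]

theorem IsPMF.pi [Fintype ι] [DecidableEq ι] {κ : ι → Type*} [∀ i, Fintype (κ i)]
    {R : ∀ i, κ i → ℝ} (hR : ∀ i, IsPMF (R i)) :
    IsPMF fun x : ∀ i, κ i => ∏ i, R i (x i) := by
  refine ⟨fun x => prod_nonneg fun i _ => (hR i).1 _, ?_⟩
  rw [← Fintype.prod_sum, prod_eq_one fun i _ => (hR i).2]

theorem isPMF_uniform [Nonempty α] : IsPMF fun _ : α => (Fintype.card α : ℝ)⁻¹ :=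
  ⟨fun _ => by positivity, by simp⟩

end IsPMF

section RelativeEntropy

variable [Fintype α] {p q : α → ℝ}

/-- The relative entropy (Kullback–Leibler divergence) `D(p ‖ q)` in bits. It has this meaning only
when `p` vanishes wherever `q` does: otherwise the divergence is infinite, whereas here the
offending terms are `0`. -/
def relEnt (p q : α → ℝ) : ℝ :=
  ∑ a, p a * logb 2 (p a / q a)

theorem sum_mul_logb_add_compl_le_relEnt [DecidableEq α] (hp : ∀ a, 0 ≤ p a) (hq : ∀ a, 0 ≤ q a)
    (hpq : ∀ a, q a = 0 → p a = 0) (s : Finset α) :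
    (∑ a ∈ s, p a) * logb 2 ((∑ a ∈ s, p a) / ∑ a ∈ s, q a) +
      (∑ a ∈ sᶜ, p a) * logb 2 ((∑ a ∈ sᶜ, p a) / ∑ a ∈ sᶜ, q a) ≤ relEnt p q := by
  have log_sum (t : Finset α) : (∑ a ∈ t, p a) * log ((∑ a ∈ t, p a) / ∑ a ∈ t, q a) ≤
      ∑ a ∈ t, p a * log (p a / q a) :=
    sum_mul_log_sum_div_sum_le (fun a _ => hp a) (fun a _ => hq a) fun a _ => hpq a
  simp only [relEnt, logb, ← mul_div_assoc, ← sum_div, ← add_div]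
  rw [← sum_add_sum_compl s]
  exact div_le_div_of_nonneg_right (add_le_add (log_sum s) (log_sum sᶜ)) (log_pos one_lt_two).le

theorem IsPMF.sum_mul_neg_logb_sum_le_relEnt_add_one (hp : IsPMF p) (hq : IsPMF q)
    (hpq : ∀ a, q a = 0 → p a = 0) (s : Finset α) :
    (∑ a ∈ s, p a) * -logb 2 (∑ a ∈ s, q a) ≤ relEnt p q + 1 := by
  classical
  have sum_eq_zero_of_sum_eq_zero (t : Finset α) (ht : ∑ a ∈ t, q a = 0) : ∑ a ∈ t, p a = 0 :=
    sum_eq_zero fun a ha => hpq a ((sum_eq_zero_iff_of_nonneg fun a _ => hq.1 a).1 ht a ha)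
  have hcoarse := sum_mul_logb_add_compl_le_relEnt hp.1 hq.1 hpq s
  rw [mul_logb_div (sum_eq_zero_of_sum_eq_zero s),
    mul_logb_div (sum_eq_zero_of_sum_eq_zero sᶜ)] at hcoarse
  have hcompl : ∑ a ∈ sᶜ, p a = 1 - ∑ a ∈ s, p a := by
    rw [← hp.2, ← sum_add_sum_compl s, add_sub_cancel_left]
  have hreject : (∑ a ∈ sᶜ, p a) * logb 2 (∑ a ∈ sᶜ, q a) ≤ 0 :=
    mul_nonpos_of_nonneg_of_nonpos (sum_nonneg fun a _ => hp.1 a)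
      (logb_nonpos one_lt_two (sum_nonneg fun a _ => hq.1 a) (hq.sum_le_one _))
  have hbit := neg_one_le_mul_logb_add_mul_logb_one_sub (∑ a ∈ s, p a)
  rw [← hcompl] at hbit
  linarith

end RelativeEntropy

section MutualInformation

variable [Fintype Ω] {p : Ω → ℝ}

theorem distOf_nonneg (hp : ∀ ω, 0 ≤ p ω) (X : Ω → α) (x : α) : 0 ≤ distOf p X x :=
  sum_nonneg fun ω _ => hp ω

theorem sum_distOf [DecidableEq α] (p : Ω → ℝ) (X : Ω → α) (s : Finset α) :
    ∑ x ∈ s, distOf p X x = ∑ ω with X ω ∈ s, p ω := by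
  rw [← sum_fiberwise_eq_sum_filter]
  exact sum_congr rfl fun x _ => sum_congr (by congr) fun _ _ => rfl

theorem le_distOf_apply (hp : ∀ ω, 0 ≤ p ω) (X : Ω → α) (ω : Ω) : p ω ≤ distOf p X (X ω) := by
  classical
  exact single_le_sum (fun ω _ => hp ω) (by simp)

theorem distOf_le_distOf_comp (hp : ∀ ω, 0 ≤ p ω) (Z : Ω → α) (f : α → β) (z : α) :
    distOf p Z z ≤ distOf p (fun ω => f (Z ω)) (f z) := by
  classical
  exact sum_le_sum_of_subset_of_nonneg
    (monotone_filter_right _ fun _ _ hω => congrArg f hω) fun ω _ _ => hp ω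

theorem distOf_prodMk_eq_zero (hp : ∀ ω, 0 ≤ p ω) {X : Ω → α} {Y : Ω → β} {z : α × β}
    (hz : distOf p X z.1 * distOf p Y z.2 = 0) : distOf p (fun ω => (X ω, Y ω)) z = 0 := by
  refine le_antisymm ?_ (distOf_nonneg hp _ z)
  rcases mul_eq_zero.1 hz with hX | hY
  · exact hX ▸ distOf_le_distOf_comp hp (fun ω => (X ω, Y ω)) Prod.fst z
  · exact hY ▸ distOf_le_distOf_comp hp (fun ω => (X ω, Y ω)) Prod.snd z

variable [Fintype α] [Fintype β]

theorem sum_distOf_mul (p : Ω → ℝ) (X : Ω → α) (f : α → ℝ) :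
    ∑ x, distOf p X x * f x = ∑ ω, p ω * f (X ω) := by
  classical
  rw [← sum_fiberwise univ X]
  refine sum_congr rfl fun x _ => ?_
  rw [distOf, sum_mul]
  refine sum_congr (by congr) fun ω hω => ?_
  rw [(mem_filter.1 hω).2]

theorem isPMF_distOf (hp : IsPMF p) (X : Ω → α) : IsPMF (distOf p X) :=
  ⟨distOf_nonneg hp.1 X, by simpa [hp.2] using sum_distOf_mul p X fun _ => 1⟩

theorem entRV_eq_neg_sum (p : Ω → ℝ) (X : Ω → α) :
    entRV p X = -∑ ω, p ω * logb 2 (distOf p X (X ω)) := by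
  rw [entRV, ent, sum_distOf_mul p X fun x => logb 2 (distOf p X x)]

theorem MI_eq_relEnt (hp : ∀ ω, 0 ≤ p ω) (X : Ω → α) (Y : Ω → β) :
    MI p X Y = relEnt (distOf p fun ω => (X ω, Y ω))
      (fun z => distOf p X z.1 * distOf p Y z.2) := by
  rw [relEnt, sum_distOf_mul p (fun ω => (X ω, Y ω)) fun z =>
    logb 2 (distOf p (fun ω => (X ω, Y ω)) z / (distOf p X z.1 * distOf p Y z.2))]
  rw [MI, entRV_eq_neg_sum, entRV_eq_neg_sum, entRV_eq_neg_sum, ← neg_add, neg_sub_neg,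
    ← sum_add_distrib, ← sum_sub_distrib]
  refine sum_congr rfl fun ω _ => ?_
  rcases (hp ω).eq_or_lt with h | hω
  · simp [← h]
  have hX := hω.trans_le (le_distOf_apply hp X ω)
  have hY := hω.trans_le (le_distOf_apply hp Y ω)
  have hXY := hω.trans_le (le_distOf_apply hp (fun ω => (X ω, Y ω)) ω)
  rw [logb_div hXY.ne' (mul_pos hX hY).ne', logb_mul hX.ne' hY.ne']
  ring

theorem IsPMF.sum_distOf_mul_neg_logb_le_MI_add_one (hp : IsPMF p) (X : Ω → α) (Y : Ω → β)
    (s : Finset (α × β)) :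
    (∑ z ∈ s, distOf p (fun ω => (X ω, Y ω)) z) *
      -logb 2 (∑ z ∈ s, distOf p X z.1 * distOf p Y z.2) ≤ MI p X Y + 1 := by
  rw [MI_eq_relEnt hp.1]
  exact (isPMF_distOf hp _).sum_mul_neg_logb_sum_le_relEnt_add_one
    ((isPMF_distOf hp X).prod (isPMF_distOf hp Y)) (fun _ => distOf_prodMk_eq_zero hp.1) s

end MutualInformation

section Impersonation

variable {PS : 𝒮 → ℝ}

/-- The probability that the decoder accepts a pair of shares drawn independently from the two
marginals, i.e. the success probability of impersonating either participant with the honest marginal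
law of the forged share. -/
def indepAcc (C : Scheme22 𝒮) (PS : 𝒮 → ℝ) (n : ℕ) : ℝ :=
  ∑ xy ∈ AccRegion C n, distOf (jp C PS n) (Xn C n) xy.1 * distOf (jp C PS n) (Yn C n) xy.2

theorem isPMF_jp (hPS : IsPMF PS) (C : Scheme22 𝒮) (n : ℕ) : IsPMF (jp C PS n) := by
  unfold jp
  simpa only [div_eq_mul_inv] using (IsPMF.pi fun _ : Fin n => hPS).prod isPMF_uniform

theorem one_sub_Pe_le_sum_AccRegion (hPS : IsPMF PS) (C : Scheme22 𝒮) (n : ℕ) :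
    1 - Pe C PS n ≤
      ∑ xy ∈ AccRegion C n, distOf (jp C PS n) (fun ω => (Xn C n ω, Yn C n ω)) xy := by
  classical
  have hjp := isPMF_jp hPS C n
  calc 1 - Pe C PS n = ∑ ω with C.dec n (C.enc n ω.1 ω.2) = some ω.1, jp C PS n ω := by
        rw [Pe, sub_eq_iff_eq_add, ← hjp.2, sum_filter_add_sum_filter_not]
    _ ≤ ∑ ω with (Xn C n ω, Yn C n ω) ∈ AccRegion C n, jp C PS n ω := by
        refine sum_le_sum_of_subset_of_nonneg (monotone_filter_right _ fun ω _ hdec => ?_)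
          fun ω _ _ => hjp.1 ω
        exact mem_filter.2 ⟨mem_univ _, Option.ne_none_iff_exists'.2 ⟨ω.1, hdec⟩⟩
    _ = ∑ xy ∈ AccRegion C n, distOf (jp C PS n) (fun ω => (Xn C n ω, Yn C n ω)) xy :=
        (sum_distOf _ _ _).symm

theorem indepAcc_pos (hPS : IsPMF PS) {C : Scheme22 𝒮} {n : ℕ} (hPe : Pe C PS n < 1) :
    0 < indepAcc C PS n := by
  have hjp := isPMF_jp hPS C n
  have hnonneg := ((isPMF_distOf hjp (Xn C n)).prod (isPMF_distOf hjp (Yn C n))).1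
  refine (sum_nonneg fun xy _ => hnonneg xy).lt_of_ne' fun h0 => ?_
  have hacc := one_sub_Pe_le_sum_AccRegion hPS C n
  rw [sum_eq_zero fun xy hxy => distOf_prodMk_eq_zero hjp.1
    ((sum_eq_zero_iff_of_nonneg fun xy _ => hnonneg xy).1 h0 xy hxy)] at hacc
  linarith

theorem indepAcc_le_one (hPS : IsPMF PS) (C : Scheme22 𝒮) (n : ℕ) : indepAcc C PS n ≤ 1 :=
  have hjp := isPMF_jp hPS C n
  ((isPMF_distOf hjp (Xn C n)).prod (isPMF_distOf hjp (Yn C n))).sum_le_one _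

theorem one_sub_Pe_mul_neg_logb_indepAcc_le (hPS : IsPMF PS) (C : Scheme22 𝒮) (n : ℕ) :
    (1 - Pe C PS n) * -logb 2 (indepAcc C PS n) ≤ MI (jp C PS n) (Xn C n) (Yn C n) + 1 := by
  have hjp := isPMF_jp hPS C n
  have hnonneg : 0 ≤ indepAcc C PS n := sum_nonneg fun _ _ =>
    mul_nonneg (distOf_nonneg hjp.1 _ _) (distOf_nonneg hjp.1 _ _)
  have hlog := logb_nonpos one_lt_two hnonneg (indepAcc_le_one hPS C n)
  exact (mul_le_mul_of_nonneg_right (one_sub_Pe_le_sum_AccRegion hPS C n)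
    (neg_nonneg.2 hlog)).trans (hjp.sum_distOf_mul_neg_logb_le_MI_add_one _ _ _)

theorem PimpX_mem_Icc (hPS : IsPMF PS) (C : Scheme22 𝒮) (n : ℕ) :
    PimpX C PS n ∈ Set.Icc (indepAcc C PS n) 1 :=
  have hjp := isPMF_jp hPS C n
  ciSup_mem_Icc (fun Q : {Q : C.X n → ℝ // IsPMF Q} =>
    (Q.2.prod (isPMF_distOf hjp (Yn C n))).sum_le_one _) ⟨_, isPMF_distOf hjp (Xn C n)⟩

theorem PimpY_mem_Icc (hPS : IsPMF PS) (C : Scheme22 𝒮) (n : ℕ) :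
    PimpY C PS n ∈ Set.Icc (indepAcc C PS n) 1 :=
  have hjp := isPMF_jp hPS C n
  ciSup_mem_Icc (fun Q : {Q : C.Y n → ℝ // IsPMF Q} =>
    ((isPMF_distOf hjp (Xn C n)).prod Q.2).sum_le_one _) ⟨_, isPMF_distOf hjp (Yn C n)⟩

theorem neg_logb_div_mem_Icc (hPS : IsPMF PS) {C : Scheme22 𝒮} {n : ℕ} (hPe : Pe C PS n < 1)
    {t : ℝ} (ht : t ∈ Set.Icc (indepAcc C PS n) 1) :
    -logb 2 t / n ∈ Set.Icc 0
      ((MI (jp C PS n) (Xn C n) (Yn C n) / n + 1 / n) / (1 - Pe C PS n)) := by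
  have hpos := indepAcc_pos hPS hPe
  have hlog : logb 2 t ≤ 0 := logb_nonpos one_lt_two (hpos.le.trans ht.1) ht.2
  have hmono : logb 2 (indepAcc C PS n) ≤ logb 2 t := logb_le_logb_of_le one_lt_two hpos ht.1
  refine ⟨div_nonneg (neg_nonneg.2 hlog) n.cast_nonneg, ?_⟩
  rw [← add_div, div_right_comm]
  refine div_le_div_of_nonneg_right ?_ n.cast_nonneg
  rw [le_div_iff₀' (sub_pos.2 hPe)]
  exact (mul_le_mul_of_nonneg_left (neg_le_neg hmono) (sub_pos.2 hPe).le).trans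
    (one_sub_Pe_mul_neg_logb_indepAcc_le hPS C n)

end Impersonation

theorem statement2_general {PS : 𝒮 → ℝ} (hPS : IsPMF PS) {ℓ : ℝ} {C : Scheme22 𝒮}
    (hPe : Tendsto (fun n => Pe C PS n) atTop (nhds 0))
    (hMI : Tendsto (fun n => MI (jp C PS n) (Xn C n) (Yn C n) / (n : ℝ)) atTop (nhds ℓ)) :
    limsup (fun n => max (-Real.logb 2 (PimpX C PS n) / (n : ℝ))
      (-Real.logb 2 (PimpY C PS n) / (n : ℝ))) atTop ≤ ℓ := by
  have hbound : Tendsto (fun n : ℕ =>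
      (MI (jp C PS n) (Xn C n) (Yn C n) / n + 1 / n) / (1 - Pe C PS n)) atTop (nhds ℓ) := by
    have h := (hMI.add tendsto_one_div_atTop_nhds_zero_nat).div (hPe.const_sub 1) (by simp)
    rwa [add_zero, sub_zero, div_one] at h
  have hPe_lt : ∀ᶠ n in atTop, Pe C PS n < 1 := hPe.eventually_lt_const one_pos
  have hX := hPe_lt.mono fun n hn =>
    neg_logb_div_mem_Icc hPS hn (PimpX_mem_Icc hPS C n)
  have hY := hPe_lt.mono fun n hn =>
    neg_logb_div_mem_Icc hPS hn (PimpY_mem_Icc hPS C n)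
  rw [← hbound.limsup_eq]
  refine limsup_le_limsup ?_ ?_ hbound.isBoundedUnder_le
  · filter_upwards [hX, hY] with n hXn hYn using max_le hXn.2 hYn.2
  · exact (isBoundedUnder_of_eventually_ge
      (hX.mono fun n hXn => le_max_of_le_left hXn.1)).isCoboundedUnder_le

/-- converse part, exponents: for any sequence of
encoder/decoder pairs asymptotically realizing a (2,2)-threshold scheme with
correlation level `ℓ ≥ 0`, the exponent of the success probability of an
impersonation attack cannot exceed the correlation level `ℓ`. -/
theorem statement2 {𝒮 : Type} [Fintype 𝒮] (PS : 𝒮 → ℝ) (hPS : IsPMF PS)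
    (ℓ : ℝ) (hℓ : 0 ≤ ℓ) (C : Scheme22 𝒮) (hC : Realizes C PS ℓ) :
    limsup (fun n => max (-Real.logb 2 (PimpX C PS n) / (n : ℝ))
      (-Real.logb 2 (PimpY C PS n) / (n : ℝ))) atTop ≤ ℓ :=
  statement2_general hPS hC.1 hC.2.2.2
end
end

section
/- Let X and Y be random variables taking values in finite sets 𝒳 and 𝒴 with joint distribution P_{XY} and marginals P_X, P_Y, let t be a real number, and let A be any subset of {(x,y) ∈ 𝒳 × 𝒴 : P_X(x) > 0, P_Y(y) > 0, and P_{XY}(x,y) > 2^t · P_X(x)P_Y(y)}. Then for every probability distribution Q on 𝒳, Σ_{(x,y)∈A} Q(x)P_Y(y) ≤ 2^{−t}, and symmetrically for every probability distribution Q on 𝒴, Σ_{(x,y)∈A} P_X(x)Q(y) ≤ 2^{−t}. -/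
open Finset Filter Real
open scoped BigOperators

noncomputable section

/-- The `𝒳`-marginal of a joint distribution on `𝒳 × 𝒴`. -/
def margX {𝒳 𝒴 : Type*} [Fintype 𝒴] (q : 𝒳 × 𝒴 → ℝ) : 𝒳 → ℝ :=
  fun x => ∑ y, q (x, y)

/-- The `𝒴`-marginal of a joint distribution on `𝒳 × 𝒴`. -/
def margY {𝒳 𝒴 : Type*} [Fintype 𝒳] (q : 𝒳 × 𝒴 → ℝ) : 𝒴 → ℝ :=
  fun y => ∑ x, q (x, y)

/-- Base-2 mutual information of a joint distribution on `𝒳 × 𝒴`. -/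
def miDist {𝒳 𝒴 : Type*} [Fintype 𝒳] [Fintype 𝒴] (q : 𝒳 × 𝒴 → ℝ) : ℝ :=
  ent (margX q) + ent (margY q) - ent q

/-- The binary entropy function `h(a) = −a log₂ a − (1−a) log₂ (1−a)`. -/
def binEnt (a : ℝ) : ℝ :=
  -(a * Real.logb 2 a) - (1 - a) * Real.logb 2 (1 - a)

/-!
Fix a letter `x` with `P_X x > 0`. Summing `2^t * (P_X x * P_Y y) ≤ P_XY (x, y)` over the section
`A_x` gives `2^t * P_X x * P_Y (A_x) ≤ P_X x`, that is `P_Y (A_x) ≤ 2^(-t)`: no single forged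
letter is accepted with larger probability, hence neither is a random one.
-/

theorem IsPMF.hasSum {α : Type*} [Fintype α] {p : α → ℝ} (hp : IsPMF p) : HasSum p 1 :=
  hp.2 ▸ hasSum_fintype p

theorem hasSum_margX {α β : Type*} [Fintype β] (q : α × β → ℝ) (x : α) :
    HasSum (fun y => q (x, y)) (margX q x) :=
  hasSum_fintype _

theorem hasSum_margY {α β : Type*} [Fintype α] (q : α × β → ℝ) (y : β) :
    HasSum (fun x => q (x, y)) (margY q y) :=
  hasSum_fintype _

theorem sum_le_inv_of_mul_le_of_hasSum {ι : Type*} {p g : ι → ℝ} {a c : ℝ} (hc : 0 < c)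
    (ha : 0 < a) (hp : ∀ i, 0 ≤ p i) (hpa : HasSum p a) {T : Finset ι}
    (hT : ∀ i ∈ T, c * (a * g i) ≤ p i) : ∑ i ∈ T, g i ≤ c⁻¹ := by
  refine le_of_mul_le_mul_left ?_ (mul_pos hc ha)
  calc c * a * ∑ i ∈ T, g i = ∑ i ∈ T, c * (a * g i) := by simp only [Finset.mul_sum, mul_assoc]
    _ ≤ ∑ i ∈ T, p i := Finset.sum_le_sum hT
    _ ≤ a := sum_le_hasSum T (fun i _ => hp i) hpa
    _ = c * a * c⁻¹ := by field_simp

section Product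

variable {α β : Type*}

theorem sum_fst_mul_snd_le_of_section_sum_le {Q : α → ℝ} {g : β → ℝ} {b m : ℝ} (hb : 0 ≤ b)
    (hQ : ∀ x, 0 ≤ Q x) (hQm : HasSum Q m) {A : Finset (α × β)}
    (hA : ∀ xy ∈ A, ∑ y ∈ A.preimage (Prod.mk xy.1) (Prod.mk_right_injective _).injOn, g y ≤ b) :
    ∑ xy ∈ A, Q xy.1 * g xy.2 ≤ b * m := by
  classical
  calc ∑ xy ∈ A, Q xy.1 * g xy.2
      = ∑ x ∈ A.image Prod.fst,
          ∑ y ∈ A.preimage (Prod.mk x) (Prod.mk_right_injective x).injOn, Q x * g y :=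
        Finset.sum_finset_product _ _ _ fun xy => by
          simpa using fun h => ⟨xy.2, h⟩
    _ ≤ ∑ x ∈ A.image Prod.fst, b * Q x := by
        refine Finset.sum_le_sum fun x hx => ?_
        obtain ⟨xy, hxy, rfl⟩ := Finset.mem_image.1 hx
        rw [← Finset.mul_sum, mul_comm b]
        exact mul_le_mul_of_nonneg_left (hA xy hxy) (hQ _)
    _ = b * ∑ x ∈ A.image Prod.fst, Q x := (Finset.mul_sum _ _ _).symm
    _ ≤ b * m := mul_le_mul_of_nonneg_left (sum_le_hasSum _ (fun x _ => hQ x) hQm) hb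

theorem sum_fst_mul_snd_le_of_mul_le {P : α × β → ℝ} {f Q : α → ℝ} {g : β → ℝ} {c m : ℝ}
    (hc : 0 < c) (hP : ∀ xy, 0 ≤ P xy) (hf : ∀ x, HasSum (fun y => P (x, y)) (f x))
    (hQ : ∀ x, 0 ≤ Q x) (hQm : HasSum Q m) {A : Finset (α × β)}
    (hA : ∀ xy ∈ A, 0 < f xy.1 ∧ c * (f xy.1 * g xy.2) ≤ P xy) :
    ∑ xy ∈ A, Q xy.1 * g xy.2 ≤ c⁻¹ * m :=
  sum_fst_mul_snd_le_of_section_sum_le (inv_nonneg.2 hc.le) hQ hQm fun xy hxy =>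
    sum_le_inv_of_mul_le_of_hasSum hc (hA xy hxy).1 (fun _ => hP _) (hf xy.1) fun _ hy =>
      (hA _ (Finset.mem_preimage.1 hy)).2

theorem summable_and_tsum_fst_mul_snd_le_of_mul_le {P : α × β → ℝ} {f Q : α → ℝ} {g : β → ℝ}
    {c m : ℝ} (hc : 0 < c) (hP : ∀ xy, 0 ≤ P xy) (hf : ∀ x, HasSum (fun y => P (x, y)) (f x))
    (hQ : ∀ x, 0 ≤ Q x) (hQm : HasSum Q m) {A : Set (α × β)} (hg : ∀ xy ∈ A, 0 ≤ g xy.2)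
    (hA : ∀ xy ∈ A, 0 < f xy.1 ∧ c * (f xy.1 * g xy.2) ≤ P xy) :
    Summable (fun xy : A => Q xy.1.1 * g xy.1.2) ∧
      ∑' xy : A, Q xy.1.1 * g xy.1.2 ≤ c⁻¹ * m := by
  have hnonneg (xy : A) : 0 ≤ Q xy.1.1 * g xy.1.2 := mul_nonneg (hQ _) (hg _ xy.2)
  have hfinite (F : Finset A) : ∑ xy ∈ F, Q xy.1.1 * g xy.1.2 ≤ c⁻¹ * m := by
    have hF : ∀ xy ∈ F.map (Function.Embedding.subtype _), xy ∈ A :=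
      fun _ => Finset.property_of_mem_map_subtype F
    simpa only [Finset.sum_map, Function.Embedding.coe_subtype] using
      sum_fst_mul_snd_le_of_mul_le hc hP hf hQ hQm fun xy hxy => hA xy (hF xy hxy)
  exact ⟨summable_of_sum_le hnonneg hfinite, Real.tsum_le_of_sum_le hnonneg hfinite⟩

end Product

theorem statement13_general {𝒳 𝒴 : Type*} {PXY : 𝒳 × 𝒴 → ℝ} {PX : 𝒳 → ℝ} {PY : 𝒴 → ℝ}
    (hPXY : ∀ xy, 0 ≤ PXY xy) (hPX : ∀ x, HasSum (fun y => PXY (x, y)) (PX x))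
    (hPY : ∀ y, HasSum (fun x => PXY (x, y)) (PY y)) (t : ℝ) {A : Set (𝒳 × 𝒴)}
    (hA : ∀ xy ∈ A, 0 < PX xy.1 ∧ 0 < PY xy.2 ∧
      (2 : ℝ) ^ t * (PX xy.1 * PY xy.2) ≤ PXY xy) :
    (∀ Q : 𝒳 → ℝ, (∀ x, 0 ≤ Q x) → HasSum Q 1 →
      Summable (fun xy : A => Q xy.1.1 * PY xy.1.2) ∧
        ∑' xy : A, Q xy.1.1 * PY xy.1.2 ≤ (2 : ℝ) ^ (-t)) ∧
    (∀ Q : 𝒴 → ℝ, (∀ y, 0 ≤ Q y) → HasSum Q 1 →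
      Summable (fun xy : A => PX xy.1.1 * Q xy.1.2) ∧
        ∑' xy : A, PX xy.1.1 * Q xy.1.2 ≤ (2 : ℝ) ^ (-t)) := by
  have hc : (0 : ℝ) < 2 ^ t := Real.rpow_pos_of_pos two_pos t
  rw [Real.rpow_neg two_pos.le, ← mul_one ((2 : ℝ) ^ t)⁻¹]
  refine ⟨fun Q hQ hQ1 => ?_, fun Q hQ hQ1 => ?_⟩
  · exact summable_and_tsum_fst_mul_snd_le_of_mul_le hc hPXY hPX hQ hQ1
      (fun xy hxy => (hA xy hxy).2.1.le) fun xy hxy => ⟨(hA xy hxy).1, (hA xy hxy).2.2⟩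
  · let swapEquiv := (Equiv.prodComm 𝒳 𝒴).image A
    have hswap := summable_and_tsum_fst_mul_snd_le_of_mul_le (P := PXY ∘ Prod.swap) (g := PX)
      (A := Equiv.prodComm 𝒳 𝒴 '' A) hc (fun yx => hPXY yx.swap) hPY hQ hQ1
      (Set.forall_mem_image.2 fun xy hxy => (hA xy hxy).1.le)
      (Set.forall_mem_image.2 fun xy hxy =>
        ⟨(hA xy hxy).2.1, by simpa [mul_comm (PY _)] using (hA xy hxy).2.2⟩)
    rw [← swapEquiv.summable_iff, ← swapEquiv.tsum_eq] at hswap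
    simp only [mul_comm (PX _)]
    exact hswap

/-- change-of-measure bound: if every pair in `A` has
positive marginals and information density exceeding `t`, i.e.
`P_{XY}(x,y) > 2^t·P_X(x)P_Y(y)`, then for every forging distribution `Q`,
`Σ_{(x,y)∈A} Q(x)P_Y(y) ≤ 2^{−t}`, and symmetrically on the other side. -/
theorem statement13 {𝒳 𝒴 : Type} [Fintype 𝒳] [Fintype 𝒴]
    (PXY : 𝒳 × 𝒴 → ℝ) (hPXY : IsPMF PXY) (t : ℝ) (A : Finset (𝒳 × 𝒴))
    (hA : ∀ xy ∈ A, 0 < margX PXY xy.1 ∧ 0 < margY PXY xy.2 ∧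
      (2 : ℝ) ^ t * (margX PXY xy.1 * margY PXY xy.2) < PXY xy) :
    (∀ Q : 𝒳 → ℝ, IsPMF Q →
      ∑ xy ∈ A, Q xy.1 * margY PXY xy.2 ≤ (2 : ℝ) ^ (-t)) ∧
    (∀ Q : 𝒴 → ℝ, IsPMF Q →
      ∑ xy ∈ A, margX PXY xy.1 * Q xy.2 ≤ (2 : ℝ) ^ (-t)) := by
  obtain ⟨forgeX, forgeY⟩ := statement13_general hPXY.1 (hasSum_margX PXY) (hasSum_margY PXY) t
    (A := A) fun xy hxy => (hA xy hxy).imp_right (And.imp_right le_of_lt)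
  exact ⟨fun Q hQ => (A.tsum_subtype' fun xy => Q xy.1 * _).ge.trans (forgeX Q hQ.1 hQ.hasSum).2,
    fun Q hQ => (A.tsum_subtype' fun xy => _ * Q xy.2).ge.trans (forgeY Q hQ.1 hQ.hasSum).2⟩
end
end
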